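/- Let Ω ⊂ ℝⁿ be a bounded open set, H a constant, and u ∈ C²(Ω) ∩ C¹(closure Ω) a function satisfying div(Du/√(1+|Du|²)) = 2H in Ω. Let v ∈ C¹(closure Ω) be any function with v = u on ∂Ω such that the difference h = v − u is admissible for integration by parts (e.g. h is compactly supported in Ω), and suppose v encloses the same volume: ∫_Ω v = ∫_Ω u. Then the graph of u has the least area: ∫_Ω √(1+|Dv|²) ≥ ∫_Ω √(1+|Du|²). -/

import Mathlib

/-!
The area integrand `p ↦ √(1 + |p|²)` is convex with gradient `p / √(1 + |p|²)`, so pointwise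
`√(1 + |Dv|²) - √(1 + |Du|²) ≥ ⟪F, Dh⟫`, where `F = Du / √(1 + |Du|²)` and `h = v - u`. As `h` has
compact support in `Ω`, integrating by parts turns `∫ ⟪F, Dh⟫` into `-∫ h div F = -2H ∫ h`, which
vanishes by the volume constraint.

Only the difference of the two area elements is ever integrated in this argument, and it is
continuous with compact support in `Ω`; the areas themselves may be infinite. They are finite for
functions that are `C¹` up to the boundary of a bounded `Ω`, whose derivative is bounded.
-/

noncomputable section
open Set
open scoped RealInnerProductSpace

/-- Euclidean space ℝⁿ. -/
abbrev En (n : ℕ) : Type := EuclideanSpace ℝ (Fin n)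

/-- The mean curvature operator `M u = div (Du / √(1+|Du|²))` in ℝⁿ. -/
def mcDivN {n : ℕ} (u : En n → ℝ) (x : En n) : ℝ :=
  ∑ i : Fin n,
    fderiv ℝ (fun y => (Real.sqrt (1 + ‖gradient u y‖ ^ 2))⁻¹ • gradient u y) x
      (EuclideanSpace.single i 1) i

open MeasureTheory Measure Bornology
open scoped Topology Gradient

section Calculus

variable {E F : Type*} [NormedAddCommGroup E] [NormedSpace ℝ E] [NormedAddCommGroup F]
  [NormedSpace ℝ F] {f : E → F}

lemma contDiff_of_tsupport_subset {Ω : Set E} {n : WithTop ℕ∞} (hΩ : IsOpen Ω)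
    (hf : ContDiffOn ℝ n f Ω) (hsupp : tsupport f ⊆ Ω) : ContDiff ℝ n f := by
  refine contDiff_iff_contDiffAt.2 fun x => ?_
  by_cases hx : x ∈ tsupport f
  · exact hf.contDiffAt (hΩ.mem_nhds (hsupp hx))
  · exact contDiffAt_const.congr_of_eventuallyEq (notMem_tsupport_iff_eventuallyEq.1 hx)

/-- Derivatives within `s` need not be unique at boundary points, so `fderivWithin ℝ f s` need not
be continuous there; the bound comes from the continuous field of derivatives provided by
`ContDiffWithinAt`, which agrees with `fderiv ℝ f` in the interior. -/
lemma exists_mem_nhdsWithin_isBounded_image_fderiv {s : Set E} {x : E}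
    (hf : ContDiffWithinAt ℝ 1 f s x) (hx : x ∈ s) :
    ∃ t ∈ 𝓝[s] x, IsBounded (fderiv ℝ f '' (t ∩ interior s)) := by
  obtain ⟨t, ht, -, -, f', hf', hf'_cont⟩ :=
    (contDiffWithinAt_succ_iff_hasFDerivWithinAt' (n := 0) (by simp)).1 (by simpa using hf)
  rw [insert_eq_of_mem hx] at ht
  have hf'_near : ∀ᶠ y in 𝓝[s] x, f' y ∈ Metric.ball (f' x) 1 :=
    hf'_cont.continuousWithinAt (Metric.ball_mem_nhds _ one_pos)
  refine ⟨t ∩ {y | f' y ∈ Metric.ball (f' x) 1}, Filter.inter_mem ht hf'_near,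
    (Metric.isBounded_ball (x := f' x) (r := 1)).subset ?_⟩
  rintro - ⟨y, ⟨⟨hyt, hy⟩, hys⟩, rfl⟩
  rwa [((hf' y hyt).hasFDerivAt (mem_interior_iff_mem_nhds.1 hys)).fderiv]

lemma isBounded_image_fderiv_interior {K : Set E} (hK : IsCompact K) (hf : ContDiffOn ℝ 1 f K) :
    IsBounded (fderiv ℝ f '' interior K) := by
  have hbounded : IsBounded (fderiv ℝ f '' (K ∩ interior K)) :=
    hK.induction_on (p := fun t => IsBounded (fderiv ℝ f '' (t ∩ interior K))) (by simp)
      (fun s t hst ht => ht.subset (by gcongr))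
      (fun s t hs ht => by simpa only [union_inter_distrib_right, image_union] using hs.union ht)
      (fun x hx => exists_mem_nhdsWithin_isBounded_image_fderiv (hf x hx) hx)
  rwa [inter_eq_right.2 interior_subset] at hbounded

end Calculus

section Integration

lemma integrableOn_of_continuousOn_of_eq_zero_off_isCompact {X F : Type*} [TopologicalSpace X]
    [T2Space X] [MeasurableSpace X] [OpensMeasurableSpace X] [NormedAddCommGroup F]
    {μ : Measure X} [IsFiniteMeasureOnCompacts μ] {f : X → F} {Ω K : Set X}
    (hΩ : MeasurableSet Ω) (hf : ContinuousOn f Ω) (hK : IsCompact K) (hKΩ : K ⊆ Ω)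
    (hzero : ∀ x ∈ Ω \ K, f x = 0) : IntegrableOn f Ω μ :=
  ((hf.mono hKΩ).integrableOn_compact hK).of_forall_sdiff_eq_zero hΩ hzero

variable {E F : Type*} [NormedAddCommGroup E] [NormedSpace ℝ E] [MeasurableSpace E] [BorelSpace E]
  [NormedAddCommGroup F] [NormedSpace ℝ F] {μ : Measure E} {f : E → F}

lemma integrableOn_fderiv_apply [IsFiniteMeasureOnCompacts μ] {Ω : Set E} {w : E → E}
    (hΩ : IsOpen Ω) (hf : ContDiffOn ℝ 1 f Ω) (hcpt : HasCompactSupport f) (hsupp : tsupport f ⊆ Ω)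
    (hw : ContinuousOn w Ω) : IntegrableOn (fun x => fderiv ℝ f x (w x)) Ω μ :=
  integrableOn_of_continuousOn_of_eq_zero_off_isCompact hΩ.measurableSet
    ((hf.continuousOn_fderiv_of_isOpen hΩ le_rfl).clm_apply hw) hcpt hsupp
    fun x hx => by rw [fderiv_of_notMem_tsupport ℝ hx.2, _root_.zero_apply]

lemma integral_fderiv_eq_zero_of_hasCompactSupport [FiniteDimensional ℝ E] [CompleteSpace F]
    [IsAddHaarMeasure μ] (hf : ContDiff ℝ 1 f) (hsupp : HasCompactSupport f) :
    ∫ x, fderiv ℝ f x ∂μ = 0 := by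
  have hint : Integrable (fderiv ℝ f) μ :=
    (hf.continuous_fderiv one_ne_zero).integrable_of_hasCompactSupport (hsupp.fderiv ℝ)
  ext w
  rw [ContinuousLinearMap.integral_apply hint]
  -- integration by parts against the constant function `1`
  simpa using integral_smul_fderiv_eq_neg_fderiv_smul_of_integrable (𝕜 := ℝ) (μ := μ)
    (f := fun _ => 1) (g := f) (v := w) (by simp) (by simpa using hint.apply_continuousLinearMap w)
    (by simpa using hf.continuous.integrable_of_hasCompactSupport hsupp)
    (fun _ _ => differentiableAt_const _) (fun x _ => hf.differentiable one_ne_zero x)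

end Integration

section Divergence

variable {E : Type*} [NormedAddCommGroup E] [NormedSpace ℝ E] [FiniteDimensional ℝ E]

variable (E) in
/-- The trace of endomorphisms of a finite-dimensional space, as a continuous linear form; this is
what lets it commute with integrals. -/
def traceCLM : (E →L[ℝ] E) →L[ℝ] ℝ :=
  (LinearMap.trace ℝ E ∘ₗ ContinuousLinearMap.coeLM ℝ).toContinuousLinearMap

lemma traceCLM_apply (L : E →L[ℝ] E) : traceCLM E L = LinearMap.trace ℝ E L :=
  rfl

lemma traceCLM_smulRight (φ : E →L[ℝ] ℝ) (w : E) : traceCLM E (φ.smulRight w) = φ w :=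
  LinearMap.trace_smulRight φ.toLinearMap w

/-- The divergence of a vector field, defined without coordinates as the trace of its derivative.
It is `0` where the field is not differentiable. -/
def divergence (F : E → E) (x : E) : ℝ :=
  traceCLM E (fderiv ℝ F x)

lemma divergence_eq_sum_fderiv_single {ι : Type*} [Fintype ι] [DecidableEq ι]
    (F : EuclideanSpace ℝ ι → EuclideanSpace ℝ ι) (x : EuclideanSpace ℝ ι) :
    divergence F x = ∑ i, fderiv ℝ F x (EuclideanSpace.single i 1) i := by
  simp only [divergence, traceCLM_apply,
    LinearMap.trace_eq_sum_inner _ (EuclideanSpace.basisFun ι ℝ),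
    EuclideanSpace.basisFun_apply, EuclideanSpace.inner_single_left]
  simp

lemma divergence_fun_smul {h : E → ℝ} {F : E → E} {x : E} (hh : DifferentiableAt ℝ h x)
    (hF : DifferentiableAt ℝ F x) :
    divergence (fun y => h y • F y) x = h x * divergence F x + fderiv ℝ h x (F x) := by
  rw [divergence, fderiv_fun_smul hh hF, map_add, map_smul, traceCLM_smulRight, smul_eq_mul,
    divergence]

lemma continuousOn_divergence {Ω : Set E} {F : E → E} (hΩ : IsOpen Ω) (hF : ContDiffOn ℝ 1 F Ω) :
    ContinuousOn (divergence F) Ω :=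
  (traceCLM E).continuous.comp_continuousOn (hF.continuousOn_fderiv_of_isOpen hΩ le_rfl)

variable [MeasurableSpace E] [BorelSpace E] {μ : Measure E}

theorem integral_divergence_eq_zero_of_hasCompactSupport [IsAddHaarMeasure μ] {F : E → E}
    (hF : ContDiff ℝ 1 F) (hsupp : HasCompactSupport F) : ∫ x, divergence F x ∂μ = 0 := by
  have hint : Integrable (fderiv ℝ F) μ :=
    (hF.continuous_fderiv one_ne_zero).integrable_of_hasCompactSupport (hsupp.fderiv ℝ)
  simp only [divergence, (traceCLM E).integral_comp_comm hint,
    integral_fderiv_eq_zero_of_hasCompactSupport hF hsupp, map_zero]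

variable {Ω : Set E} {h : E → ℝ} {F : E → E}

lemma integrableOn_mul_divergence [IsFiniteMeasureOnCompacts μ] (hΩ : IsOpen Ω)
    (hh : ContinuousOn h Ω) (hcpt : HasCompactSupport h) (hsupp : tsupport h ⊆ Ω)
    (hF : ContDiffOn ℝ 1 F Ω) : IntegrableOn (fun x => h x * divergence F x) Ω μ :=
  integrableOn_of_continuousOn_of_eq_zero_off_isCompact hΩ.measurableSet
    (hh.mul (continuousOn_divergence hΩ hF)) hcpt hsupp
    fun x hx => by rw [image_eq_zero_of_notMem_tsupport hx.2, zero_mul]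

theorem setIntegral_mul_divergence_eq_neg [IsAddHaarMeasure μ] (hΩ : IsOpen Ω)
    (hh : ContDiffOn ℝ 1 h Ω) (hcpt : HasCompactSupport h) (hsupp : tsupport h ⊆ Ω)
    (hF : ContDiffOn ℝ 1 F Ω) :
    ∫ x in Ω, h x * divergence F x ∂μ = -∫ x in Ω, fderiv ℝ h x (F x) ∂μ := by
  set G : E → E := fun x => h x • F x
  have hGh : tsupport G ⊆ tsupport h := tsupport_smul_subset_left h F
  have hG : ContDiff ℝ 1 G := contDiff_of_tsupport_subset hΩ (hh.smul hF) (hGh.trans hsupp)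
  have hdiv_zero : ∫ x in Ω, divergence G x ∂μ = 0 := by
    rw [setIntegral_eq_integral_of_forall_compl_eq_zero fun x hx => ?_]
    · exact integral_divergence_eq_zero_of_hasCompactSupport hG
        (hcpt.mono' ((subset_tsupport G).trans hGh))
    · rw [divergence, fderiv_of_notMem_tsupport ℝ fun hxG => hx (hsupp (hGh hxG)), map_zero]
  have hdiv : ∀ x ∈ Ω, divergence G x = h x * divergence F x + fderiv ℝ h x (F x) := fun x hx =>
    divergence_fun_smul ((hh.differentiableOn one_ne_zero).differentiableAt (hΩ.mem_nhds hx))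
      ((hF.differentiableOn one_ne_zero).differentiableAt (hΩ.mem_nhds hx))
  rw [setIntegral_congr_fun hΩ.measurableSet hdiv,
    integral_add (integrableOn_mul_divergence hΩ hh.continuousOn hcpt hsupp hF)
      (integrableOn_fderiv_apply hΩ hh hcpt hsupp hF.continuousOn)] at hdiv_zero
  exact eq_neg_of_add_eq_zero_left hdiv_zero

end Divergence

section AreaElement

variable {E : Type*} [NormedAddCommGroup E] [InnerProductSpace ℝ E]

/-- Cauchy–Schwarz for the vectors `(1, p)` and `(1, q)` of `ℝ × E`. -/
lemma one_add_inner_le_sqrt_mul_sqrt (p q : E) :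
    1 + ⟪p, q⟫ ≤ √(1 + ‖p‖ ^ 2) * √(1 + ‖q‖ ^ 2) := by
  rw [← Real.sqrt_mul (by positivity)]
  apply Real.le_sqrt_of_sq_le
  calc (1 + ⟪p, q⟫) ^ 2 = 1 + 2 * ⟪p, q⟫ + ⟪p, q⟫ * ⟪p, q⟫ := by ring
    _ ≤ 1 + (‖p‖ ^ 2 + ‖q‖ ^ 2) + ‖p‖ ^ 2 * ‖q‖ ^ 2 := by
      have hcs := real_inner_mul_inner_self_le p q
      simp only [real_inner_self_eq_norm_sq] at hcs
      linarith [norm_sub_sq_real p q, sq_nonneg ‖p - q‖]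
    _ = (1 + ‖p‖ ^ 2) * (1 + ‖q‖ ^ 2) := by ring

lemma inner_inv_smul_sub_le_sqrt_sub_sqrt (p q : E) :
    ⟪(√(1 + ‖p‖ ^ 2))⁻¹ • p, q - p⟫ ≤ √(1 + ‖q‖ ^ 2) - √(1 + ‖p‖ ^ 2) := by
  have hpos : 0 < √(1 + ‖p‖ ^ 2) := by positivity
  have hsq : √(1 + ‖p‖ ^ 2) * √(1 + ‖p‖ ^ 2) = 1 + ‖p‖ ^ 2 := Real.mul_self_sqrt (by positivity)
  rw [real_inner_smul_left, inner_sub_right, real_inner_self_eq_norm_sq, inv_mul_le_iff₀ hpos,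
    mul_sub, hsq]
  linarith [one_add_inner_le_sqrt_mul_sqrt p q]

variable [CompleteSpace E] {Ω : Set E} {u v : E → ℝ}

/-- The area element `√(1 + |Du|²)` of the graph of `u`. -/
def areaElement (u : E → ℝ) (x : E) : ℝ :=
  √(1 + ‖∇ u x‖ ^ 2)

/-- The field `Du / √(1 + |Du|²)`, whose divergence is the mean curvature operator; it is minus the
horizontal part of the upward unit normal to the graph of `u`. -/
def normalizedGradient (u : E → ℝ) (x : E) : E :=
  (areaElement u x)⁻¹ • ∇ u x

lemma contDiffOn_gradient {m n : WithTop ℕ∞} (hΩ : IsOpen Ω) (hu : ContDiffOn ℝ n u Ω)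
    (hmn : m + 1 ≤ n) : ContDiffOn ℝ m (∇ u) Ω :=
  (InnerProductSpace.toDual ℝ E).symm.contDiff.comp_contDiffOn (hu.fderiv_of_isOpen hΩ hmn)

lemma contDiffOn_areaElement {m n : WithTop ℕ∞} (hΩ : IsOpen Ω) (hu : ContDiffOn ℝ n u Ω)
    (hmn : m + 1 ≤ n) : ContDiffOn ℝ m (areaElement u) Ω :=
  (contDiffOn_const.add ((contDiffOn_gradient hΩ hu hmn).norm_sq ℝ)).sqrt fun _ _ => by positivity

lemma contDiffOn_normalizedGradient {m n : WithTop ℕ∞} (hΩ : IsOpen Ω) (hu : ContDiffOn ℝ n u Ω)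
    (hmn : m + 1 ≤ n) : ContDiffOn ℝ m (normalizedGradient u) Ω :=
  ((contDiffOn_areaElement hΩ hu hmn).inv fun _ _ => by unfold areaElement; positivity).smul
    (contDiffOn_gradient hΩ hu hmn)

lemma fderiv_sub_apply_normalizedGradient_le {x : E} (hu : DifferentiableAt ℝ u x)
    (hv : DifferentiableAt ℝ v x) :
    fderiv ℝ (fun y => v y - u y) x (normalizedGradient u x) ≤
      areaElement v x - areaElement u x := by
  rw [fderiv_fun_sub hv hu, _root_.sub_apply, ← inner_gradient_left,
    ← inner_gradient_left, ← inner_sub_left, real_inner_comm]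
  exact inner_inv_smul_sub_le_sqrt_sub_sqrt _ _

variable [MeasurableSpace E] [BorelSpace E] {μ : Measure E} [IsFiniteMeasureOnCompacts μ]

lemma integrableOn_areaElement_interior {K : Set E} (hK : IsCompact K)
    (hu : ContDiffOn ℝ 1 u K) : IntegrableOn (areaElement u) (interior K) μ := by
  obtain ⟨C, hC⟩ := (isBounded_image_fderiv_interior hK hu).exists_norm_le
  have hcont : ContinuousOn (areaElement u) (interior K) :=
    (contDiffOn_areaElement isOpen_interior (hu.mono interior_subset)
      (zero_add 1).le).continuousOn
  refine .of_bound ((measure_mono interior_subset).trans_lt hK.measure_lt_top)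
    (hcont.aestronglyMeasurable measurableSet_interior) (√(1 + C ^ 2)) ?_
  filter_upwards [ae_restrict_mem measurableSet_interior] with x hx
  have hgrad : ‖∇ u x‖ ≤ C := by
    simpa [gradient] using hC _ (mem_image_of_mem _ hx)
  rw [areaElement, Real.norm_of_nonneg (Real.sqrt_nonneg _)]
  gcongr

lemma integrableOn_areaElement_sub (hΩ : IsOpen Ω) (hu : ContDiffOn ℝ 1 u Ω)
    (hv : ContDiffOn ℝ 1 v Ω) (hcpt : HasCompactSupport fun x => v x - u x)
    (hsupp : tsupport (fun x => v x - u x) ⊆ Ω) :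
    IntegrableOn (fun x => areaElement v x - areaElement u x) Ω μ := by
  have hcont : ContinuousOn (fun x => areaElement v x - areaElement u x) Ω :=
    (contDiffOn_areaElement hΩ hv (zero_add 1).le).continuousOn.sub
      (contDiffOn_areaElement hΩ hu (zero_add 1).le).continuousOn
  refine integrableOn_of_continuousOn_of_eq_zero_off_isCompact hΩ.measurableSet hcont hcpt hsupp
    fun x hx => ?_
  have hvu : v =ᶠ[𝓝 x] u :=
    (notMem_tsupport_iff_eventuallyEq.1 hx.2).mono fun y hy => sub_eq_zero.1 hy
  rw [areaElement, areaElement, gradient, gradient, hvu.fderiv_eq, sub_self]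

end AreaElement

section AreaComparison

variable {E : Type*} [NormedAddCommGroup E] [InnerProductSpace ℝ E] [FiniteDimensional ℝ E]
  [MeasurableSpace E] [BorelSpace E] {Ω : Set E} {u v : E → ℝ}

theorem neg_setIntegral_sub_mul_divergence_le (hΩ : IsOpen Ω) (hu : ContDiffOn ℝ 2 u Ω)
    (hv : ContDiffOn ℝ 1 v Ω) (hcpt : HasCompactSupport fun x => v x - u x)
    (hsupp : tsupport (fun x => v x - u x) ⊆ Ω) :
    -∫ x in Ω, (v x - u x) * divergence (normalizedGradient u) x ≤
      ∫ x in Ω, (areaElement v x - areaElement u x) := by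
  have hu₁ : ContDiffOn ℝ 1 u Ω := hu.of_le one_le_two
  have hF : ContDiffOn ℝ 1 (normalizedGradient u) Ω :=
    contDiffOn_normalizedGradient hΩ hu one_add_one_eq_two.le
  rw [setIntegral_mul_divergence_eq_neg hΩ (hv.sub hu₁) hcpt hsupp hF, neg_neg]
  refine setIntegral_mono_on
    (integrableOn_fderiv_apply hΩ (hv.sub hu₁) hcpt hsupp hF.continuousOn)
    (integrableOn_areaElement_sub hΩ hu₁ hv hcpt hsupp) hΩ.measurableSet fun x hx => ?_
  exact fderiv_sub_apply_normalizedGradient_le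
    ((hu₁.differentiableOn one_ne_zero).differentiableAt (hΩ.mem_nhds hx))
    ((hv.differentiableOn one_ne_zero).differentiableAt (hΩ.mem_nhds hx))

theorem H_graph_minimizes_area_general (hΩ : IsOpen Ω) {H : ℝ} (hu : ContDiffOn ℝ 2 u Ω)
    (hcurv : ∀ x ∈ Ω, divergence (normalizedGradient u) x = 2 * H) (hv : ContDiffOn ℝ 1 v Ω)
    (hcpt : HasCompactSupport fun x => v x - u x) (hsupp : tsupport (fun x => v x - u x) ⊆ Ω)
    (hvol : ∫ x in Ω, (v x - u x) = 0) :
    IntegrableOn (fun x => areaElement v x - areaElement u x) Ω ∧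
      0 ≤ ∫ x in Ω, (areaElement v x - areaElement u x) := by
  refine ⟨integrableOn_areaElement_sub hΩ (hu.of_le one_le_two) hv hcpt hsupp, ?_⟩
  have hfirst_variation : ∫ x in Ω, (v x - u x) * divergence (normalizedGradient u) x = 0 := by
    rw [setIntegral_congr_fun hΩ.measurableSet fun x hx =>
      congrArg ((v x - u x) * ·) (hcurv x hx), integral_mul_const, hvol, zero_mul]
  simpa only [hfirst_variation, neg_zero] using
    neg_setIntegral_sub_mul_divergence_le hΩ hu hv hcpt hsupp

end AreaComparison

lemma mcDivN_eq_divergence_normalizedGradient {n : ℕ} (u : En n → ℝ) (x : En n) :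
    mcDivN u x = divergence (normalizedGradient u) x :=
  (divergence_eq_sum_fderiv_single _ x).symm

/-- **H-graphs minimize area for fixed volume.**  Let `u ∈ C²(Ω) ∩ C¹(closure Ω)`
satisfy `div(Du/√(1+|Du|²)) = 2H` on a bounded open `Ω ⊂ ℝⁿ`.  If `v ∈ C¹(closure Ω)` agrees
with `u` on `∂Ω`, the difference `v − u` is compactly supported in `Ω`, and `v` encloses the
same volume (`∫_Ω v = ∫_Ω u`), then `∫_Ω √(1+|Dv|²) ≥ ∫_Ω √(1+|Du|²)`. -/
theorem H_graph_minimizes_area (n : ℕ) (Ω : Set (En n))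
    (hopen : IsOpen Ω) (hbd : Bornology.IsBounded Ω)
    (H : ℝ) (u v : En n → ℝ)
    (hu2 : ContDiffOn ℝ 2 u Ω) (hu1 : ContDiffOn ℝ 1 u (closure Ω))
    (heq : ∀ x ∈ Ω, mcDivN u x = 2 * H)
    (hv1 : ContDiffOn ℝ 1 v (closure Ω))
    (hbdry : ∀ x ∈ frontier Ω, v x = u x)
    (hsupp : tsupport (fun x => v x - u x) ⊆ Ω)
    (hvol : (∫ x in Ω, v x) = ∫ x in Ω, u x) :
    (∫ x in Ω, Real.sqrt (1 + ‖gradient u x‖ ^ 2)) ≤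
      ∫ x in Ω, Real.sqrt (1 + ‖gradient v x‖ ^ 2) := by
  have hcpt : IsCompact (closure Ω) := hbd.isCompact_closure
  have hΩ : Ω ⊆ interior (closure Ω) := interior_maximal subset_closure hopen
  have hvol_sub : ∫ x in Ω, (v x - u x) = 0 := by
    rw [integral_sub ((hv1.continuousOn.integrableOn_compact hcpt).mono_set subset_closure)
      ((hu1.continuousOn.integrableOn_compact hcpt).mono_set subset_closure), hvol, sub_self]
  have harea := (H_graph_minimizes_area_general hopen hu2
    (fun x hx => (mcDivN_eq_divergence_normalizedGradient u x).symm.trans (heq x hx))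
    (hv1.mono subset_closure)
    (hcpt.of_isClosed_subset (isClosed_tsupport _) (hsupp.trans subset_closure)) hsupp hvol_sub).2
  rwa [integral_sub ((integrableOn_areaElement_interior hcpt hv1).mono_set hΩ)
    ((integrableOn_areaElement_interior hcpt hu1).mono_set hΩ), sub_nonneg] at harea
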